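/- Let V : ℝ³ → [0,∞) be continuous with compact support. Then the negative Morse index of the Schrödinger-type quadratic form Q(φ) := ∫_{ℝ³} |∇φ(x)|² dx − ∫_{ℝ³} V(x) φ(x)² dx is finite: there exists N ∈ ℕ such that every finite-dimensional subspace W of the space of smooth compactly supported functions C_c^∞(ℝ³) with the property that Q(φ) < 0 for every φ ∈ W ∖ {0} satisfies dim W ≤ N. -/

import Mathlib

open MeasureTheory

/-! A mean-zero function on a convex cell of diameter `ε` in an `n`-dimensional space satisfies the
Poincaré inequality `∫ φ² ≤ 2ⁿ ε² ∫ |∇φ|²`: integrate `∇φ` along the segment joining two points of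
the cell, apply Cauchy–Schwarz, and average over both endpoints. At each time the point on the
segment depends on one of the endpoints through a homothety of ratio at least `1 / 2`, and the
change of variables costs a factor at most `2ⁿ`.

Cut the region where `V` is positive into finitely many such cells, with `ε` so small that
`2ⁿ ε² sup V ≤ 1`. A function with mean zero on every cell then has `Q(φ) ≥ 0`, so the map sending
`φ` to its cell integrals is injective on any subspace where `Q` is negative definite, and the
dimension of such a subspace is at most the number of cells.
-/

open scoped ENNReal Topology

lemma sq_lintegral_le_measure_univ_mul {α : Type*} [MeasurableSpace α] (ν : Measure α)
    {f : α → ℝ≥0∞} (hf : AEMeasurable f ν) :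
    (∫⁻ x, f x ∂ν) ^ 2 ≤ ν Set.univ * ∫⁻ x, f x ^ 2 ∂ν := by
  have holder : ∫⁻ x, f x ∂ν ≤ ν Set.univ ^ (1 / 2 : ℝ) * (∫⁻ x, f x ^ 2 ∂ν) ^ (1 / 2 : ℝ) := by
    simpa using ENNReal.lintegral_mul_le_Lp_mul_Lq ν Real.HolderConjugate.two_two
      (aemeasurable_const (b := (1 : ℝ≥0∞))) hf
  calc (∫⁻ x, f x ∂ν) ^ 2
      ≤ (ν Set.univ ^ (1 / 2 : ℝ) * (∫⁻ x, f x ^ 2 ∂ν) ^ (1 / 2 : ℝ)) ^ 2 := by gcongr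
    _ = ν Set.univ * ∫⁻ x, f x ^ 2 ∂ν := by
        rw [mul_pow, ← ENNReal.rpow_two, ← ENNReal.rpow_two, ← ENNReal.rpow_mul,
          ← ENNReal.rpow_mul]
        norm_num

lemma measure_univ_mul_enorm_sub_average_sq_le {α F : Type*} [MeasurableSpace α]
    [NormedAddCommGroup F] [NormedSpace ℝ F] [CompleteSpace F] (ν : Measure α) [IsFiniteMeasure ν]
    {f : α → F} (hf : Integrable f ν) (c : F) :
    ν Set.univ * ‖c - ⨍ x, f x ∂ν‖ₑ ^ 2 ≤ ∫⁻ x, ‖c - f x‖ₑ ^ 2 ∂ν := by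
  rcases eq_or_ne ν 0 with rfl | hν
  · simp
  have hsub : ν.real Set.univ • (c - ⨍ x, f x ∂ν) = ∫ x, (c - f x) ∂ν := by
    rw [smul_sub, measure_smul_average, integral_sub (integrable_const c) hf, integral_const]
  have hle : ν Set.univ * ‖c - ⨍ x, f x ∂ν‖ₑ ≤ ∫⁻ x, ‖c - f x‖ₑ ∂ν := by
    refine le_of_eq_of_le ?_ (hsub ▸ enorm_integral_le_lintegral_enorm _)
    rw [enorm_smul, Real.enorm_of_nonneg measureReal_nonneg, ofReal_measureReal]
  refine (ENNReal.mul_le_mul_iff_right (Measure.measure_univ_ne_zero.2 hν)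
    (measure_ne_top ν Set.univ)).1 ?_
  calc ν Set.univ * (ν Set.univ * ‖c - ⨍ x, f x ∂ν‖ₑ ^ 2)
      = (ν Set.univ * ‖c - ⨍ x, f x ∂ν‖ₑ) ^ 2 := by ring
    _ ≤ (∫⁻ x, ‖c - f x‖ₑ ∂ν) ^ 2 := by gcongr
    _ ≤ ν Set.univ * ∫⁻ x, ‖c - f x‖ₑ ^ 2 ∂ν :=
        sq_lintegral_le_measure_univ_mul ν
          (aestronglyMeasurable_const.sub hf.aestronglyMeasurable).enorm

lemma lintegral_lintegral_lintegral_rotate {α β γ : Type*} [MeasurableSpace α] [MeasurableSpace β]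
    [MeasurableSpace γ] (μ : Measure α) (ν : Measure β) (τ : Measure γ) [SFinite μ] [SFinite ν]
    [SFinite τ] {f : α → β → γ → ℝ≥0∞} (hf : Measurable fun p : α × β × γ => f p.1 p.2.1 p.2.2) :
    ∫⁻ a, ∫⁻ b, ∫⁻ c, f a b c ∂τ ∂ν ∂μ = ∫⁻ c, ∫⁻ a, ∫⁻ b, f a b c ∂ν ∂μ ∂τ := by
  have hac : Measurable fun p : α × γ => ∫⁻ b, f p.1 b p.2 ∂ν :=
    (hf.comp (by fun_prop : Measurable fun q : (α × γ) × β =>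
      (q.1.1, q.2, q.1.2))).lintegral_prod_right'
  calc ∫⁻ a, ∫⁻ b, ∫⁻ c, f a b c ∂τ ∂ν ∂μ
      = ∫⁻ a, ∫⁻ c, ∫⁻ b, f a b c ∂ν ∂τ ∂μ := lintegral_congr fun a =>
        lintegral_lintegral_swap (hf.comp measurable_prodMk_left).aemeasurable
    _ = ∫⁻ c, ∫⁻ a, ∫⁻ b, f a b c ∂ν ∂μ ∂τ := lintegral_lintegral_swap hac.aemeasurable

lemma integrableOn_of_continuous_of_isBounded {X F : Type*} [MetricSpace X] [ProperSpace X]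
    [MeasurableSpace X] [OpensMeasurableSpace X] (μ : Measure X) [IsFiniteMeasureOnCompacts μ]
    [NormedAddCommGroup F] {f : X → F} (hf : Continuous f) {s : Set X}
    (hs : Bornology.IsBounded s) : IntegrableOn f s μ :=
  (hf.continuousOn.integrableOn_compact hs.isCompact_closure).mono_set subset_closure

lemma integral_mul_le_mul_setIntegral {α : Type*} [MeasurableSpace α] {μ : Measure α} {V f : α → ℝ}
    {M : ℝ} {U : Set α} (hU : MeasurableSet U) (hVM : ∀ x, V x ≤ M) (hVU : {x | 0 < V x} ⊆ U)
    (hf0 : ∀ x, 0 ≤ f x) (hf : Integrable f μ) (hVf : Integrable (fun x => V x * f x) μ) :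
    ∫ x, V x * f x ∂μ ≤ M * ∫ x in U, f x ∂μ := by
  rw [← integral_const_mul, ← integral_indicator hU]
  refine integral_mono hVf ((hf.const_mul M).indicator hU) fun x => ?_
  by_cases hx : x ∈ U
  · simpa only [Set.indicator_of_mem hx] using mul_le_mul_of_nonneg_right (hVM x) (hf0 x)
  · have hVx : V x ≤ 0 := not_lt.1 fun h => hx (hVU h)
    simpa only [Set.indicator_of_notMem hx] using mul_nonpos_of_nonpos_of_nonneg hVx (hf0 x)

section Poincare

open AffineMap (lineMap)
open Module (finrank)

variable {E F : Type*} [NormedAddCommGroup E] [NormedSpace ℝ E]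
  [NormedAddCommGroup F] [NormedSpace ℝ F]

lemma enorm_sub_sq_le_lintegral_fderiv_lineMap {φ : E → F} (hφ : ContDiff ℝ 1 φ) (x y : E) :
    ‖φ y - φ x‖ₑ ^ 2 ≤
      ‖y - x‖ₑ ^ 2 * ∫⁻ t in Set.Icc (0 : ℝ) 1, ‖fderiv ℝ φ (lineMap x y t)‖ₑ ^ 2 := by
  have hline : ContDiff ℝ 1 fun t : ℝ => lineMap x y t := by
    simp only [AffineMap.lineMap_apply_module']
    fun_prop
  have hderiv (t : ℝ) : deriv (fun t => φ (lineMap x y t)) t = fderiv ℝ φ (lineMap x y t) (y - x) :=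
    ((hφ.differentiable one_ne_zero _).hasFDerivAt.comp_hasDerivAt t
      AffineMap.hasDerivAt_lineMap).deriv
  have hcont : Continuous fun t : ℝ => ‖fderiv ℝ φ (lineMap x y t)‖ₑ :=
    ((hφ.continuous_fderiv one_ne_zero).comp hline.continuous).enorm
  have hftc : ‖φ y - φ x‖ₑ ≤
      ‖y - x‖ₑ * ∫⁻ t in Set.Icc (0 : ℝ) 1, ‖fderiv ℝ φ (lineMap x y t)‖ₑ := by
    calc ‖φ y - φ x‖ₑ
        ≤ ∫⁻ t in Set.Icc (0 : ℝ) 1, ‖fderiv ℝ φ (lineMap x y t) (y - x)‖ₑ := by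
          simpa only [Function.comp_def, hderiv, AffineMap.lineMap_apply_one,
            AffineMap.lineMap_apply_zero] using enorm_sub_le_lintegral_deriv_of_contDiffOn_Icc
              (hφ.comp hline).contDiffOn zero_le_one
      _ ≤ ∫⁻ t in Set.Icc (0 : ℝ) 1, ‖y - x‖ₑ * ‖fderiv ℝ φ (lineMap x y t)‖ₑ :=
          lintegral_mono fun t => (ContinuousLinearMap.le_opENorm _ _).trans_eq (mul_comm _ _)
      _ = _ := lintegral_const_mul _ hcont.measurable
  calc ‖φ y - φ x‖ₑ ^ 2
      ≤ ‖y - x‖ₑ ^ 2 * (∫⁻ t in Set.Icc (0 : ℝ) 1, ‖fderiv ℝ φ (lineMap x y t)‖ₑ) ^ 2 := by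
        rw [← mul_pow]
        gcongr
    _ ≤ ‖y - x‖ₑ ^ 2 * ∫⁻ t in Set.Icc (0 : ℝ) 1, ‖fderiv ℝ φ (lineMap x y t)‖ₑ ^ 2 := by
        gcongr
        simpa using sq_lintegral_le_measure_univ_mul (volume.restrict (Set.Icc (0 : ℝ) 1))
          hcont.measurable.aemeasurable

variable [MeasurableSpace E] [BorelSpace E] [FiniteDimensional ℝ E]

lemma lintegral_comp_lineMap (μ : Measure E) [μ.IsAddHaarMeasure] {g : E → ℝ≥0∞}
    (hg : Measurable g) (c : E) {t : ℝ} (ht : t ≠ 0) :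
    ∫⁻ x, g (lineMap c x t) ∂μ = ENNReal.ofReal |(t ^ finrank ℝ E)⁻¹| * ∫⁻ x, g x ∂μ := by
  calc ∫⁻ x, g (lineMap c x t) ∂μ
      = ∫⁻ x, g ((1 - t) • c + t • x) ∂μ := by simp only [AffineMap.lineMap_apply_module]
    _ = ∫⁻ z, g ((1 - t) • c + z) ∂(μ.map (t • ·)) :=
        (lintegral_map (hg.comp (measurable_const_add _)) (measurable_const_smul t)).symm
    _ = _ := by
        rw [Measure.map_addHaar_smul μ ht, lintegral_smul_measure, lintegral_add_left_eq_self,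
          smul_eq_mul]

variable (μ : Measure E) [μ.IsAddHaarMeasure] {C : Set E}

lemma setLIntegral_comp_lineMap_le {g : E → ℝ≥0∞} (hg : Measurable g) (hC : Convex ℝ C)
    (hCm : MeasurableSet C) {c : E} (hc : c ∈ C) {t : ℝ} (ht : t ∈ Set.Icc (1 / 2 : ℝ) 1) :
    ∫⁻ x in C, g (lineMap c x t) ∂μ ≤ 2 ^ finrank ℝ E * ∫⁻ x in C, g x ∂μ := by
  have ht0 : 0 < t := one_half_pos.trans_le ht.1
  have hmem : ∀ x ∈ C, g (lineMap c x t) = C.indicator g (lineMap c x t) := fun x hx =>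
    (Set.indicator_of_mem (hC.lineMap_mem hc hx ⟨ht0.le, ht.2⟩) g).symm
  have hfactor : ENNReal.ofReal |(t ^ finrank ℝ E)⁻¹| ≤ 2 ^ finrank ℝ E := by
    rw [← inv_pow, abs_of_pos (by positivity), ENNReal.ofReal_pow (by positivity)]
    gcongr
    rw [ENNReal.ofReal_le_ofNat]
    simpa using inv_anti₀ one_half_pos ht.1
  calc ∫⁻ x in C, g (lineMap c x t) ∂μ
      = ∫⁻ x in C, C.indicator g (lineMap c x t) ∂μ := setLIntegral_congr_fun hCm hmem
    _ ≤ ∫⁻ x, C.indicator g (lineMap c x t) ∂μ := setLIntegral_le_lintegral _ _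
    _ ≤ 2 ^ finrank ℝ E * ∫⁻ x, C.indicator g x ∂μ := by
        rw [lintegral_comp_lineMap μ (hg.indicator hCm) c ht0.ne']
        gcongr
    _ = 2 ^ finrank ℝ E * ∫⁻ x in C, g x ∂μ := by rw [lintegral_indicator hCm]

lemma lintegral_lintegral_comp_lineMap_le {g : E → ℝ≥0∞} (hg : Measurable g) (hC : Convex ℝ C)
    (hCm : MeasurableSet C) {t : ℝ} (ht : t ∈ Set.Icc (0 : ℝ) 1) :
    ∫⁻ y in C, ∫⁻ x in C, g (lineMap x y t) ∂μ ∂μ ≤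
      μ C * (2 ^ finrank ℝ E * ∫⁻ x in C, g x ∂μ) := by
  -- Exchanging `x` and `y` replaces `t` by `1 - t`.
  wlog h : t ≤ 1 / 2 generalizing t
  · have hmeas : Measurable (Function.uncurry fun y x : E => g (lineMap x y t)) := by
      simp only [AffineMap.lineMap_apply_module]
      exact hg.comp (Continuous.measurable (by fun_prop))
    rw [lintegral_lintegral_swap hmeas.aemeasurable]
    simpa only [AffineMap.lineMap_apply_one_sub] using
      this (t := 1 - t) (Set.Icc.mem_iff_one_sub_mem.1 ht) (by linarith)
  calc ∫⁻ y in C, ∫⁻ x in C, g (lineMap x y t) ∂μ ∂μ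
      ≤ ∫⁻ _ in C, 2 ^ finrank ℝ E * ∫⁻ x in C, g x ∂μ ∂μ := by
        refine setLIntegral_mono' hCm fun y hy => ?_
        have ht' : 1 - t ∈ Set.Icc (1 / 2 : ℝ) 1 := ⟨by linarith, by linarith [ht.1]⟩
        simpa only [AffineMap.lineMap_apply_one_sub] using
          setLIntegral_comp_lineMap_le μ hg hC hCm hy ht'
    _ = _ := by rw [setLIntegral_const, mul_comm]

lemma lintegral_lintegral_enorm_sub_sq_le {φ : E → F} (hφ : ContDiff ℝ 1 φ) (hC : Convex ℝ C)
    (hCm : MeasurableSet C) (hCb : Bornology.IsBounded C) :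
    ∫⁻ y in C, ∫⁻ x in C, ‖φ y - φ x‖ₑ ^ 2 ∂μ ∂μ ≤
      μ C * (2 ^ finrank ℝ E * Metric.ediam C ^ 2 * ∫⁻ x in C, ‖fderiv ℝ φ x‖ₑ ^ 2 ∂μ) := by
  set d := Metric.ediam C
  have hd : d ^ 2 ≠ ∞ := ENNReal.pow_ne_top hCb.ediam_ne_top
  set g : E → ℝ≥0∞ := fun x => ‖fderiv ℝ φ x‖ₑ ^ 2
  have hg : Measurable g := (hφ.continuous_fderiv one_ne_zero).enorm.measurable.pow_const 2
  have hmeas : Measurable fun p : E × E × ℝ => g (lineMap p.2.1 p.1 p.2.2) := by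
    simp only [AffineMap.lineMap_apply_module]
    exact hg.comp (Continuous.measurable (by fun_prop))
  calc ∫⁻ y in C, ∫⁻ x in C, ‖φ y - φ x‖ₑ ^ 2 ∂μ ∂μ
      ≤ ∫⁻ y in C, ∫⁻ x in C, d ^ 2 *
          ∫⁻ t in Set.Icc (0 : ℝ) 1, g (lineMap x y t) ∂volume ∂μ ∂μ := by
        refine setLIntegral_mono' hCm fun y hy => setLIntegral_mono' hCm fun x hx => ?_
        refine (enorm_sub_sq_le_lintegral_fderiv_lineMap hφ x y).trans ?_
        gcongr
        exact (edist_eq_enorm_sub y x).symm.trans_le (Metric.edist_le_ediam_of_mem hy hx)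
    _ = d ^ 2 * ∫⁻ t in Set.Icc (0 : ℝ) 1, ∫⁻ y in C, ∫⁻ x in C, g (lineMap x y t) ∂μ ∂μ := by
        simp only [lintegral_const_mul' _ _ hd]
        rw [lintegral_lintegral_lintegral_rotate (f := fun y x t => g (lineMap x y t)) _ _ _ hmeas]
    _ ≤ d ^ 2 * ∫⁻ _ in Set.Icc (0 : ℝ) 1, μ C * (2 ^ finrank ℝ E * ∫⁻ x in C, g x ∂μ) := by
        refine mul_le_mul_right ?_ (d ^ 2)
        exact setLIntegral_mono' measurableSet_Icc fun t ht =>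
          lintegral_lintegral_comp_lineMap_le μ hg hC hCm ht
    _ = μ C * (2 ^ finrank ℝ E * d ^ 2 * ∫⁻ x in C, g x ∂μ) := by
        rw [setLIntegral_const, Real.volume_Icc, sub_zero, ENNReal.ofReal_one]
        ring

lemma setLIntegral_enorm_sub_average_sq_le [CompleteSpace F] {φ : E → F} (hφ : ContDiff ℝ 1 φ)
    (hC : Convex ℝ C) (hCm : MeasurableSet C) (hCb : Bornology.IsBounded C) :
    ∫⁻ y in C, ‖φ y - ⨍ x in C, φ x ∂μ‖ₑ ^ 2 ∂μ ≤
      2 ^ finrank ℝ E * Metric.ediam C ^ 2 * ∫⁻ x in C, ‖fderiv ℝ φ x‖ₑ ^ 2 ∂μ := by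
  rcases eq_or_ne (μ C) 0 with h0 | h0
  · simp [Measure.restrict_eq_zero.2 h0]
  have hfin : μ C ≠ ∞ := hCb.measure_lt_top.ne
  have : IsFiniteMeasure (μ.restrict C) := ⟨by simpa using hfin.lt_top⟩
  refine (ENNReal.mul_le_mul_iff_right h0 hfin).1 ?_
  calc μ C * ∫⁻ y in C, ‖φ y - ⨍ x in C, φ x ∂μ‖ₑ ^ 2 ∂μ
      = ∫⁻ y in C, μ C * ‖φ y - ⨍ x in C, φ x ∂μ‖ₑ ^ 2 ∂μ := (lintegral_const_mul' _ _ hfin).symm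
    _ ≤ ∫⁻ y in C, ∫⁻ x in C, ‖φ y - φ x‖ₑ ^ 2 ∂μ ∂μ := lintegral_mono fun y => by
        simpa using measure_univ_mul_enorm_sub_average_sq_le (μ.restrict C)
          (integrableOn_of_continuous_of_isBounded μ hφ.continuous hCb) (φ y)
    _ ≤ _ := lintegral_lintegral_enorm_sub_sq_le μ hφ hC hCm hCb

theorem setIntegral_norm_sub_average_sq_le [CompleteSpace F] {φ : E → F} (hφ : ContDiff ℝ 1 φ)
    (hC : Convex ℝ C) (hCm : MeasurableSet C) (hCb : Bornology.IsBounded C) :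
    ∫ y in C, ‖φ y - ⨍ x in C, φ x ∂μ‖ ^ 2 ∂μ ≤
      2 ^ finrank ℝ E * Metric.diam C ^ 2 * ∫ x in C, ‖fderiv ℝ φ x‖ ^ 2 ∂μ := by
  have hsub : IntegrableOn (fun y => ‖φ y - ⨍ x in C, φ x ∂μ‖ ^ 2) C μ :=
    integrableOn_of_continuous_of_isBounded μ ((hφ.continuous.sub continuous_const).norm.pow 2) hCb
  have hfderiv : IntegrableOn (fun x => ‖fderiv ℝ φ x‖ ^ 2) C μ :=
    integrableOn_of_continuous_of_isBounded μ ((hφ.continuous_fderiv one_ne_zero).norm.pow 2) hCb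
  rw [← ENNReal.ofReal_le_ofReal_iff (by positivity), ENNReal.ofReal_mul (by positivity),
    ofReal_integral_eq_lintegral_ofReal hsub (ae_of_all _ fun _ => by positivity),
    ofReal_integral_eq_lintegral_ofReal hfderiv (ae_of_all _ fun _ => by positivity),
    ENNReal.ofReal_mul (by positivity), ENNReal.ofReal_pow Metric.diam_nonneg, Metric.diam,
    ENNReal.ofReal_toReal hCb.ediam_ne_top, ENNReal.ofReal_pow zero_le_two, ENNReal.ofReal_ofNat]
  simpa only [ENNReal.ofReal_pow (norm_nonneg _), ofReal_norm] using
    setLIntegral_enorm_sub_average_sq_le μ hφ hC hCm hCb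

end Poincare

section Mesh

variable {E : Type*} [NormedAddCommGroup E] [NormedSpace ℝ E] [MeasurableSpace E]

/-- A convex mesh of size `ε`: finitely many disjoint bounded convex cells of diameter at most `ε`.
Boundedness is a separate field since `Metric.diam` is `0` on unbounded sets. -/
structure IsConvexMesh (ε : ℝ) (P : Finset (Set E)) : Prop where
  pairwiseDisjoint : (P : Set (Set E)).PairwiseDisjoint id
  measurableSet : ∀ C ∈ P, MeasurableSet C
  convex : ∀ C ∈ P, Convex ℝ C
  isBounded : ∀ C ∈ P, Bornology.IsBounded C
  diam_le : ∀ C ∈ P, Metric.diam C ≤ ε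

lemma exists_isConvexMesh_pi {ι : Type*} [Fintype ι] {K : Set (ι → ℝ)} (hK : Bornology.IsBounded K)
    {ε : ℝ} (hε : 0 < ε) : ∃ P : Finset (Set (ι → ℝ)), IsConvexMesh ε P ∧ K ⊆ ⋃ C ∈ P, C := by
  classical
  obtain ⟨B, hB, hKB⟩ := BoxIntegral.le_hasIntegralVertices_of_isBounded hK
  obtain ⟨n, hn⟩ := exists_nat_one_div_lt hε
  let π := (BoxIntegral.unitPartition.prepartition (n + 1) B).toPrepartition
  have hπ : π.IsPartition := BoxIntegral.unitPartition.prepartition_isPartition (n + 1) hB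
  have hdiam : ∀ J ∈ π.boxes, Metric.diam (J : Set (ι → ℝ)) ≤ ε := fun J hJ => by
    obtain ⟨ν, -, rfl⟩ := BoxIntegral.unitPartition.mem_prepartition_boxes_iff.1 hJ
    calc Metric.diam (BoxIntegral.unitPartition.box (n + 1) ν : Set (ι → ℝ))
        ≤ Metric.diam (BoxIntegral.Box.Icc (BoxIntegral.unitPartition.box (n + 1) ν)) :=
          Metric.diam_mono BoxIntegral.Box.coe_subset_Icc (BoxIntegral.Box.isBounded_Icc _)
      _ ≤ 1 / (n + 1 : ℕ) := BoxIntegral.unitPartition.diam_boxIcc (n + 1) ν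
      _ ≤ ε := by exact_mod_cast hn.le
  refine ⟨π.boxes.image BoxIntegral.Box.toSet, ⟨?_, ?_, ?_, ?_, ?_⟩, ?_⟩
  · rw [Finset.coe_image]
    rintro _ ⟨J, hJ, rfl⟩ _ ⟨J', hJ', rfl⟩ hne
    exact π.pairwiseDisjoint hJ hJ' (ne_of_apply_ne BoxIntegral.Box.toSet hne)
  · exact Finset.forall_mem_image.2 fun J _ => J.measurableSet_coe
  · refine Finset.forall_mem_image.2 fun J _ => ?_
    rw [BoxIntegral.Box.coe_eq_pi]
    exact convex_pi fun i _ => convex_Ioc _ _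
  · exact Finset.forall_mem_image.2 fun J _ => J.isBounded
  · exact Finset.forall_mem_image.2 hdiam
  · rw [Finset.set_biUnion_finset_image, ← π.iUnion_def', hπ.iUnion_eq]
    exact hKB

lemma IsConvexMesh.preimage {E' : Type*} [NormedAddCommGroup E'] [NormedSpace ℝ E']
    [MeasurableSpace E'] [BorelSpace E] [BorelSpace E'] [DecidableEq (Set E)] (e : E ≃L[ℝ] E')
    {ε : ℝ} {P : Finset (Set E')} (hP : IsConvexMesh ε P) :
    IsConvexMesh (‖(e.symm : E' →L[ℝ] E)‖ * ε) (P.image (e ⁻¹' ·)) where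
  pairwiseDisjoint := by
    rw [Finset.coe_image]
    rintro _ ⟨C, hC, rfl⟩ _ ⟨C', hC', rfl⟩ hne
    exact (hP.pairwiseDisjoint hC hC' (ne_of_apply_ne _ hne)).preimage e
  measurableSet := Finset.forall_mem_image.2 fun C hC =>
    e.continuous.measurable (hP.measurableSet C hC)
  convex := Finset.forall_mem_image.2 fun C hC => (hP.convex C hC).linear_preimage e.toLinearMap
  isBounded := Finset.forall_mem_image.2 fun C hC =>
    e.antilipschitz.isBounded_preimage (hP.isBounded C hC)
  diam_le := Finset.forall_mem_image.2 fun C hC => by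
    have hdiam : Metric.diam (e.symm '' C) ≤ ‖(e.symm : E' →L[ℝ] E)‖ * Metric.diam C :=
      e.symm.lipschitz.diam_image_le C (hP.isBounded C hC)
    rw [e.image_symm_eq_preimage] at hdiam
    exact hdiam.trans (by gcongr; exact hP.diam_le C hC)

lemma IsConvexMesh.mono {ε δ : ℝ} {P : Finset (Set E)} (hP : IsConvexMesh ε P) (h : ε ≤ δ) :
    IsConvexMesh δ P :=
  { hP with diam_le := fun C hC => (hP.diam_le C hC).trans h }

lemma exists_isConvexMesh [BorelSpace E] [FiniteDimensional ℝ E] {K : Set E}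
    (hK : Bornology.IsBounded K) {ε : ℝ} (hε : 0 < ε) :
    ∃ P : Finset (Set E), IsConvexMesh ε P ∧ K ⊆ ⋃ C ∈ P, C := by
  classical
  let e := (Module.finBasis ℝ E).equivFunL
  set k := ‖(e.symm : (Fin (Module.finrank ℝ E) → ℝ) →L[ℝ] E)‖
  obtain ⟨P, hP, hKP⟩ := exists_isConvexMesh_pi (e.lipschitz.isBounded_image hK)
    (show 0 < ε / (k + 1) by positivity)
  refine ⟨P.image (e ⁻¹' ·), (hP.preimage e).mono ?_, ?_⟩
  · rw [mul_div_left_comm]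
    exact mul_le_of_le_one_right hε.le ((div_le_one (by positivity)).2 (by linarith))
  · rw [Finset.set_biUnion_finset_image, ← Set.preimage_iUnion₂]
    exact Set.image_subset_iff.1 hKP

variable [BorelSpace E] [FiniteDimensional ℝ E] (μ : Measure E) [μ.IsAddHaarMeasure]

theorem IsConvexMesh.setIntegral_norm_sq_le {F : Type*} [NormedAddCommGroup F] [NormedSpace ℝ F]
    [CompleteSpace F] {ε : ℝ} {P : Finset (Set E)} (hP : IsConvexMesh ε P) {φ : E → F}
    (hφ : ContDiff ℝ 1 φ) (hmean : ∀ C ∈ P, ∫ x in C, φ x ∂μ = 0) :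
    ∫ x in ⋃ C ∈ P, C, ‖φ x‖ ^ 2 ∂μ ≤
      2 ^ Module.finrank ℝ E * ε ^ 2 * ∫ x in ⋃ C ∈ P, C, ‖fderiv ℝ φ x‖ ^ 2 ∂μ := by
  have hunion {f : E → ℝ} (hf : Continuous f) :
      ∫ x in ⋃ C ∈ P, C, f x ^ 2 ∂μ = ∑ C ∈ P, ∫ x in C, f x ^ 2 ∂μ :=
    integral_biUnion_finset P hP.measurableSet hP.pairwiseDisjoint fun C hC =>
      integrableOn_of_continuous_of_isBounded μ (hf.pow 2) (hP.isBounded C hC)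
  rw [hunion hφ.continuous.norm, hunion (hφ.continuous_fderiv one_ne_zero).norm, Finset.mul_sum]
  refine Finset.sum_le_sum fun C hC => ?_
  calc ∫ x in C, ‖φ x‖ ^ 2 ∂μ
      ≤ 2 ^ Module.finrank ℝ E * Metric.diam C ^ 2 * ∫ x in C, ‖fderiv ℝ φ x‖ ^ 2 ∂μ := by
        simpa [setAverage_eq, hmean C hC] using setIntegral_norm_sub_average_sq_le μ hφ
          (hP.convex C hC) (hP.measurableSet C hC) (hP.isBounded C hC)
    _ ≤ 2 ^ Module.finrank ℝ E * ε ^ 2 * ∫ x in C, ‖fderiv ℝ φ x‖ ^ 2 ∂μ := by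
        gcongr
        exact hP.diam_le C hC

theorem IsConvexMesh.integral_mul_sq_le {ε M : ℝ} {P : Finset (Set E)} (hP : IsConvexMesh ε P)
    {V φ : E → ℝ} (hV : LocallyIntegrable V μ) (hVM : ∀ x, V x ≤ M)
    (hVP : {x | 0 < V x} ⊆ ⋃ C ∈ P, C) (hM : 0 ≤ M)
    (hεM : M * (2 ^ Module.finrank ℝ E * ε ^ 2) ≤ 1) (hφ : ContDiff ℝ 1 φ)
    (hφs : HasCompactSupport φ) (hmean : ∀ C ∈ P, ∫ x in C, φ x ∂μ = 0) :
    ∫ x, V x * φ x ^ 2 ∂μ ≤ ∫ x, ‖fderiv ℝ φ x‖ ^ 2 ∂μ := by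
  set U : Set E := ⋃ C ∈ P, C
  have hU : MeasurableSet U := P.measurableSet_biUnion hP.measurableSet
  have hsq {f : E → ℝ} (hf : HasCompactSupport f) : HasCompactSupport fun x => f x ^ 2 :=
    hf.comp_left (g := fun r : ℝ => r ^ 2) (zero_pow two_ne_zero)
  have hφ2 : Integrable (fun x => φ x ^ 2) μ :=
    (hφ.continuous.pow 2).integrable_of_hasCompactSupport (hsq hφs)
  have hVφ : Integrable (fun x => V x * φ x ^ 2) μ :=
    hV.integrable_smul_right_of_hasCompactSupport (hφ.continuous.pow 2) (hsq hφs)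
  have hDφ : Integrable (fun x => ‖fderiv ℝ φ x‖ ^ 2) μ :=
    ((hφ.continuous_fderiv one_ne_zero).norm.pow 2).integrable_of_hasCompactSupport
      (hsq (hφs.fderiv ℝ).norm)
  calc ∫ x, V x * φ x ^ 2 ∂μ
      ≤ M * ∫ x in U, φ x ^ 2 ∂μ :=
        integral_mul_le_mul_setIntegral hU hVM hVP (fun x => sq_nonneg _) hφ2 hVφ
    _ = M * ∫ x in U, ‖φ x‖ ^ 2 ∂μ := by simp only [Real.norm_eq_abs, sq_abs]
    _ ≤ M * (2 ^ Module.finrank ℝ E * ε ^ 2 * ∫ x in U, ‖fderiv ℝ φ x‖ ^ 2 ∂μ) := by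
        gcongr
        exact hP.setIntegral_norm_sq_le μ hφ hmean
    _ = M * (2 ^ Module.finrank ℝ E * ε ^ 2) * ∫ x in U, ‖fderiv ℝ φ x‖ ^ 2 ∂μ :=
        (mul_assoc _ _ _).symm
    _ ≤ ∫ x in U, ‖fderiv ℝ φ x‖ ^ 2 ∂μ :=
        mul_le_of_le_one_left (integral_nonneg fun x => sq_nonneg _) hεM
    _ ≤ ∫ x, ‖fderiv ℝ φ x‖ ^ 2 ∂μ :=
        setIntegral_le_integral hDφ (ae_of_all _ fun x => sq_nonneg _)

end Mesh

lemma rank_le_card_of_setIntegral_eq_zero {α : Type*} [MeasurableSpace α] (μ : Measure α)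
    (W : Submodule ℝ (α → ℝ)) (P : Finset (Set α))
    (hint : ∀ φ ∈ W, ∀ C ∈ P, IntegrableOn φ C μ)
    (hzero : ∀ φ ∈ W, (∀ C ∈ P, ∫ x in C, φ x ∂μ = 0) → φ = 0) :
    Module.rank ℝ W ≤ P.card := by
  let L : W →ₗ[ℝ] (P → ℝ) :=
    { toFun := fun φ C => ∫ x in (C : Set α), (φ : α → ℝ) x ∂μ
      map_add' := fun φ ψ => funext fun C =>
        integral_add (hint φ φ.2 C C.2) (hint ψ ψ.2 C C.2)
      map_smul' := fun c φ => funext fun C => integral_const_mul c _ }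
  have hL : Function.Injective L := (injective_iff_map_eq_zero L).2 fun φ hφ =>
    Subtype.ext (hzero φ φ.2 fun C hC => congrFun hφ ⟨C, hC⟩)
  simpa using LinearMap.rank_le_of_injective L hL

theorem stmt18_general {E : Type*} [NormedAddCommGroup E] [NormedSpace ℝ E] [FiniteDimensional ℝ E]
    [MeasurableSpace E] [BorelSpace E] (μ : Measure E) [μ.IsAddHaarMeasure] {V : E → ℝ}
    (hV : LocallyIntegrable V μ) (hVbdd : BddAbove (Set.range V))
    (hVpos : Bornology.IsBounded {x | 0 < V x}) :
    ∃ N : ℕ, ∀ W : Submodule ℝ (E → ℝ),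
      (∀ φ ∈ W, ContDiff ℝ 1 φ ∧ HasCompactSupport φ) →
      (∀ φ ∈ W, φ ≠ 0 →
        (∫ x, ‖fderiv ℝ φ x‖ ^ 2 ∂μ) - (∫ x, V x * φ x ^ 2 ∂μ) < 0) →
      Module.rank ℝ W ≤ N := by
  obtain ⟨M, hM, hVM⟩ := hVbdd.exists_ge 0
  have hsmall : ∀ᶠ ε : ℝ in 𝓝 0, M * (2 ^ Module.finrank ℝ E * ε ^ 2) < 1 :=
    ((by fun_prop : Continuous fun ε : ℝ => M * (2 ^ Module.finrank ℝ E * ε ^ 2)).tendsto' 0 0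
      (by simp)).eventually_lt_const one_pos
  obtain ⟨ε, hεM, hε⟩ :=
    ((hsmall.filter_mono nhdsWithin_le_nhds).and (self_mem_nhdsWithin (s := Set.Ioi 0))).exists
  obtain ⟨P, hP, hVP⟩ := exists_isConvexMesh hVpos hε
  refine ⟨P.card, fun W hW hneg => rank_le_card_of_setIntegral_eq_zero μ W P
    (fun φ hφ C _ => ?_) fun φ hφ hmean => ?_⟩
  · exact ((hW φ hφ).1.continuous.integrable_of_hasCompactSupport (hW φ hφ).2).integrableOn
  · by_contra hne
    exact (hneg φ hφ hne).not_ge (sub_nonneg.2 (hP.integral_mul_sq_le μ hV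
      (Set.forall_mem_range.1 hVM) hVP hM hεM.le (hW φ hφ).1 (hW φ hφ).2 hmean))

lemma norm_gradient_eq_norm_fderiv {E : Type*} [NormedAddCommGroup E] [InnerProductSpace ℝ E]
    [CompleteSpace E] (φ : E → ℝ) (x : E) : ‖gradient φ x‖ = ‖fderiv ℝ φ x‖ :=
  (InnerProductSpace.toDual ℝ E).symm.norm_map _

/-- For a continuous, nonnegative, compactly supported potential `V` on `ℝ³`,
the Schrödinger-type quadratic form `Q(φ) = ∫ |∇φ|² − ∫ V φ²` has finite negative Morse index:
there is `N` such that every finite-dimensional subspace of `C_c^∞(ℝ³)` on which `Q` is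
negative definite has dimension at most `N`. -/
theorem stmt18 (V : EuclideanSpace ℝ (Fin 3) → ℝ)
    (hVcont : Continuous V) (hVnonneg : ∀ x, 0 ≤ V x)
    (hVsupp : HasCompactSupport V) :
    ∃ N : ℕ, ∀ W : Submodule ℝ (EuclideanSpace ℝ (Fin 3) → ℝ),
      (∀ φ ∈ W, ContDiff ℝ (⊤ : ℕ∞) φ ∧ HasCompactSupport φ) →
      (∀ φ ∈ W, φ ≠ 0 →
        (∫ x, ‖gradient φ x‖ ^ 2) - (∫ x, V x * φ x ^ 2) < 0) →
      FiniteDimensional ℝ W →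
      Module.finrank ℝ W ≤ N := by
  obtain ⟨N, hN⟩ := stmt18_general volume hVcont.locallyIntegrable
    (hVcont.bddAbove_range_of_hasCompactSupport hVsupp)
    (hVsupp.isCompact.isBounded.subset fun x hx => subset_tsupport V (ne_of_gt hx))
  exact ⟨N, fun W hW hneg _ => Module.finrank_le_of_rank_le (hN W
    (fun φ hφ => ⟨(hW φ hφ).1.of_le (by exact_mod_cast le_top), (hW φ hφ).2⟩)
    (by simpa only [norm_gradient_eq_norm_fderiv] using hneg))⟩
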